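/- Let Σ̃ = (∅, ∅, {0, 1, #}) be the pushdown alphabet in which every letter is a local action, and for n ≥ 1 let L_n := { # · bin_n(0) · # · bin_n(1) · ⋯ · # · bin_n(2^n − 1) · #^ω }, the singleton language consisting of the word that enumerates an n-bit binary counter, where bin_n(i) denotes the n-bit binary encoding of i. Then there is a polynomial p such that for every n ≥ 1 some VLDL formula over Σ̃ of size at most p(n) defines L_n, while every Büchi visibly pushdown automaton over Σ̃ recognizing L_n has at least 2^n states. -/

import Mathlib

/-! The stack never changes when every letter is local, so both halves are about
finite automata and temporal logic.

*Lower bound.* The word ends in `#^ω`, and its letter at position `2^n (n+1) - 1` is a bit. If an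
accepting run visited the same state at two positions `i < j < 2^n (n+1)`, cutting out the part
between them would yield an accepting run on the word with the letters `i, …, j-1` deleted. That
word would have to be the counter word again, so the latter would be periodic from `i` on with
period `j - i`, hence constantly `#` from `i` on: a contradiction. So the states at the first
`2^n (n+1)` positions are pairwise distinct (`states_lower_bound`).

*Upper bound.* Only the operators *next* and *always* are needed. The formula says that the word
begins with `# 0^n` and that, at every `#` followed by a bit, either all of the next `n` bits are `1`
and only `#` follows them, or some bit is `0`, a `#` follows, and the next block is the successor,
where bit `p` of `i + 1` is bit `p` of `i` flipped exactly when all lower bits of `i` are `1`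
(`testBit_succ_iff`). Spelled out with iterated *next*, this has cubic size. Starting from block `0`
these conditions determine all blocks one after the other (`eq_counterWord_of_spec`). -/

/-- The three kinds of letters of a pushdown alphabet: calls, returns, local actions. -/
inductive SymKind : Type
  | call | ret | loc
deriving DecidableEq

/-- The data of a visibly pushdown automaton with states `Fin n` and stack alphabet
`Fin m` (plus an implicit bottom marker `⊥`, represented by the empty stack):
call-, return- and local transitions, initial states and final states. -/
structure VPAData (A : Type) (n m : ℕ) where
  callΔ : Fin n → A → Fin n → Fin m → Bool
  retΔ  : Fin n → A → Option (Fin m) → Fin n → Bool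
  locΔ  : Fin n → A → Fin n → Bool
  start : Fin n → Bool
  final : Fin n → Bool

/-- One step of a visibly pushdown system on configurations (state, stack). Calls push,
returns pop (reading `⊥`, i.e. `none`, on the empty stack and leaving it unchanged),
local actions leave the stack unchanged. -/
def vstep {A : Type} (kind : A → SymKind) {n m : ℕ}
    (callΔ : Fin n → A → Fin n → Fin m → Bool)
    (retΔ : Fin n → A → Option (Fin m) → Fin n → Bool)
    (locΔ : Fin n → A → Fin n → Bool) :
    Fin n × List (Fin m) → A → Fin n × List (Fin m) → Prop :=
  fun c a c' =>
    match kind a with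
    | .call => ∃ g, callΔ c.1 a c'.1 g = true ∧ c'.2 = g :: c.2
    | .ret => (∃ g s, c.2 = g :: s ∧ retΔ c.1 a (some g) c'.1 = true ∧ c'.2 = s) ∨
        (c.2 = [] ∧ retΔ c.1 a none c'.1 = true ∧ c'.2 = [])
    | .loc => locΔ c.1 a c'.1 = true ∧ c'.2 = c.2

def VPAData.step {A : Type} {n m : ℕ} (M : VPAData A n m) (kind : A → SymKind) :=
  vstep kind M.callΔ M.retΔ M.locΔ

/-- Büchi acceptance for a visibly pushdown automaton: some initial infinite run
starting with empty stack visits final states infinitely often. -/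
def VPAData.BuchiAccepts {A : Type} {n m : ℕ} (M : VPAData A n m) (kind : A → SymKind)
    (α : ℕ → A) : Prop :=
  ∃ ρ : ℕ → Fin n × List (Fin m),
    M.start (ρ 0).1 = true ∧ (ρ 0).2 = [] ∧
    (∀ i, M.step kind (ρ i) (α i) (ρ (i+1))) ∧
    (∀ i, ∃ j, i ≤ j ∧ M.final (ρ j).1 = true)

/-- VLDL formulas: atoms (from `V`), Boolean connectives, and temporal operators
`⟨A⟩φ`/`[A]φ` guarded by testing visibly pushdown automata over the alphabet `A`;
the guard is given by its `VPAData` together with the map `t` assigning a test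
formula to every state. -/
inductive VLDL (V A : Type) : Type
  | atom (v : V)
  | neg (φ : VLDL V A)
  | and (φ ψ : VLDL V A)
  | or (φ ψ : VLDL V A)
  | dia (n m : ℕ) (M : VPAData A n m) (t : Fin n → VLDL V A) (φ : VLDL V A)
  | box (n m : ℕ) (M : VPAData A n m) (t : Fin n → VLDL V A) (φ : VLDL V A)

/-- Satisfaction of VLDL formulas on infinite words `α : ℕ → A` at a position `k`,
where `val v a` states that atom `v` holds at letter `a`. The guard relation
`(k, l) ∈ R_A(α)` is inlined: there is an initial accepting run of the guard on
`α_k ⋯ α_{l-1}` all of whose states' tests are satisfied at the respective positions. -/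
def VLDL.sat {V A : Type} (val : V → A → Prop) (kind : A → SymKind) :
    VLDL V A → (ℕ → A) → ℕ → Prop
  | .atom v, α, k => val v (α k)
  | .neg φ, α, k => ¬ VLDL.sat val kind φ α k
  | .and φ ψ, α, k => VLDL.sat val kind φ α k ∧ VLDL.sat val kind ψ α k
  | .or φ ψ, α, k => VLDL.sat val kind φ α k ∨ VLDL.sat val kind ψ α k
  | .dia n m M t φ, α, k => ∃ l, k ≤ l ∧
      (∃ ρ : ℕ → Fin n × List (Fin m),
        M.start (ρ k).1 = true ∧ (ρ k).2 = [] ∧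
        (∀ i, k ≤ i → i < l → M.step kind (ρ i) (α i) (ρ (i+1))) ∧
        M.final (ρ l).1 = true ∧
        (∀ i, k ≤ i → i ≤ l → VLDL.sat val kind (t (ρ i).1) α i)) ∧
      VLDL.sat val kind φ α l
  | .box n m M t φ, α, k => ∀ l, k ≤ l →
      (∃ ρ : ℕ → Fin n × List (Fin m),
        M.start (ρ k).1 = true ∧ (ρ k).2 = [] ∧
        (∀ i, k ≤ i → i < l → M.step kind (ρ i) (α i) (ρ (i+1))) ∧
        M.final (ρ l).1 = true ∧
        (∀ i, k ≤ i → i ≤ l → VLDL.sat val kind (t (ρ i).1) α i)) →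
      VLDL.sat val kind φ α l

/-- The size of a VLDL formula: the number of subformulas (including the tests of all
guard automata) plus the total number of states of all guard automata. -/
def VLDL.size {V A : Type} : VLDL V A → ℕ
  | .atom _ => 1
  | .neg φ => φ.size + 1
  | .and φ ψ => φ.size + ψ.size + 1
  | .or φ ψ => φ.size + ψ.size + 1
  | .dia n _ _ t φ => φ.size + n + 1 + (List.ofFn (fun q => (t q).size)).sum
  | .box n _ _ t φ => φ.size + n + 1 + (List.ofFn (fun q => (t q).size)).sum

/-- The `n`-bit binary encoding (most significant bit first) of `i`, as a word over the
alphabet `Fin 3` whose letters `0`, `1` are the bits and whose letter `2` is `#`. -/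
def binW (n i : ℕ) : List (Fin 3) :=
  (List.range n).map (fun j => if Nat.testBit i (n - 1 - j) then (1 : Fin 3) else 0)

/-- The finite word `# bin_n(0) # bin_n(1) ⋯ # bin_n(2^n - 1)` enumerating an
`n`-bit counter (`2 : Fin 3` is the separator `#`). -/
def counterPrefix (n : ℕ) : List (Fin 3) :=
  (List.range (2 ^ n)).foldr (fun i acc => ((2 : Fin 3) :: binW n i) ++ acc) []

/-- The infinite word `# bin_n(0) # bin_n(1) ⋯ # bin_n(2^n - 1) #^ω`. -/
def counterWord (n : ℕ) : ℕ → Fin 3 := fun k => (counterPrefix n).getD k 2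

/-! ### The counter word -/

theorem counterPrefix_aux (n N : ℕ) :
    (List.range N).foldr (fun i acc => ((2 : Fin 3) :: binW n i) ++ acc) []
      = (List.range N).flatMap (fun i => (2 : Fin 3) :: binW n i) := by
  induction List.range N with
  | nil => rfl
  | cons a l ih => simp only [List.foldr_cons, ih, List.flatMap_cons]

theorem blocks_length (n N : ℕ) :
    ((List.range N).flatMap (fun i => (2 : Fin 3) :: binW n i)).length = N * (n + 1) := by
  induction N with
  | zero => simp
  | succ N ih =>
    rw [List.range_succ, List.flatMap_append, List.length_append, ih]
    simp [binW]
    ring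

theorem blocks_get (n N i r : ℕ) (hi : i < N) (hr : r < n + 1) :
    ((List.range N).flatMap (fun i => (2 : Fin 3) :: binW n i))[i * (n + 1) + r]?
      = ((2 : Fin 3) :: binW n i)[r]? := by
  induction N with
  | zero => omega
  | succ N ih =>
    rw [List.range_succ, List.flatMap_append, List.getElem?_append, blocks_length]
    rcases Nat.lt_or_ge i N with h | h
    · have : i * (n + 1) + r < N * (n + 1) := by nlinarith
      rw [if_pos this, ih h]
    · have : i = N := by omega
      subst this
      rw [if_neg (by omega)]
      simp

theorem counterWord_sep {n i : ℕ} (hi : i < 2 ^ n) : counterWord n (i * (n + 1)) = 2 := by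
  have := blocks_get n (2 ^ n) i 0 hi (by omega)
  rw [counterWord, counterPrefix, counterPrefix_aux, List.getD_eq_getElem?_getD]
  simp only [add_zero] at this
  rw [this]
  rfl

theorem counterWord_bit {n i p : ℕ} (hi : i < 2 ^ n) (hp : p < n) :
    counterWord n (i * (n + 1) + (n - p)) = if Nat.testBit i p then 1 else 0 := by
  have := blocks_get n (2 ^ n) i (n - p) hi (by omega)
  rw [counterWord, counterPrefix, counterPrefix_aux, List.getD_eq_getElem?_getD, this]
  obtain ⟨d, hd⟩ : ∃ d, n - p = d + 1 := ⟨n - p - 1, by omega⟩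
  have h2 : n - 1 - d = p := by omega
  have h3 : d < n := by omega
  rw [hd]
  simp [binW, h2, h3]

theorem counterWord_tail {n k : ℕ} (hk : 2 ^ n * (n + 1) ≤ k) : counterWord n k = 2 := by
  have := blocks_length n (2 ^ n)
  rw [counterWord, counterPrefix, counterPrefix_aux, List.getD_eq_getElem?_getD,
    List.getElem?_eq_none (by omega)]
  rfl

/-- Every position is a separator, a bit of some block, or beyond the last block. -/
theorem position_cases (n k : ℕ) :
    (∃ i < 2 ^ n, k = i * (n + 1)) ∨ (∃ i < 2 ^ n, ∃ p < n, k = i * (n + 1) + (n - p)) ∨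
      2 ^ n * (n + 1) ≤ k := by
  have h1 := Nat.div_add_mod k (n + 1)
  have h2 := Nat.mod_lt k (show 0 < n + 1 by omega)
  rw [mul_comm] at h1
  rcases Nat.lt_or_ge (k / (n + 1)) (2 ^ n) with h | h
  · rcases Nat.eq_zero_or_pos (k % (n + 1)) with h0 | h0
    · exact Or.inl ⟨_, h, by omega⟩
    · exact Or.inr (Or.inl ⟨_, h, n - k % (n + 1), by omega, by omega⟩)
  · refine Or.inr (Or.inr ?_)
    have := Nat.mul_le_mul_right (n + 1) h
    omega

/-! ### Binary successor -/

/-- Adding one flips bit `p` exactly when all lower bits are set. -/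
theorem testBit_succ_iff (p i : ℕ) :
    (i + 1).testBit p = true ↔ ¬ ((∀ q < p, i.testBit q = true) ↔ i.testBit p = true) := by
  induction p generalizing i with
  | zero =>
    simp only [Nat.testBit_zero, decide_eq_true_eq]
    simp
    omega
  | succ p ih =>
    have key : (∀ q < p + 1, i.testBit q = true) ↔
        (i % 2 = 1 ∧ ∀ q < p, (i / 2).testBit q = true) := by
      constructor
      · intro h
        refine ⟨by simpa [Nat.testBit_zero] using h 0 (by omega), fun q hq => ?_⟩
        rw [← Nat.testBit_add_one]
        exact h (q + 1) (by omega)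
      · rintro ⟨h0, h1⟩ q hq
        cases q with
        | zero => simpa [Nat.testBit_zero] using h0
        | succ q =>
          rw [Nat.testBit_add_one]
          exact h1 q (by omega)
    rw [key, Nat.testBit_add_one, Nat.testBit_add_one]
    rcases Nat.mod_two_eq_zero_or_one i with h | h
    · rw [show (i + 1) / 2 = i / 2 by omega]
      simp [h]
    · rw [show (i + 1) / 2 = i / 2 + 1 by omega, ih]
      simp [h]

/-- An `n`-bit number all of whose bits are set is `2^n - 1`. -/
theorem all_ones_iff {n i : ℕ} (hi : i < 2 ^ n) :
    (∀ q < n, i.testBit q = true) ↔ i + 1 = 2 ^ n := by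
  constructor
  · intro h
    have : i = 2 ^ n - 1 := by
      apply Nat.eq_of_testBit_eq
      intro q
      rw [Nat.testBit_two_pow_sub_one]
      rcases Nat.lt_or_ge q n with hq | hq
      · simp [h q hq, hq]
      · have : i < 2 ^ q := lt_of_lt_of_le hi (Nat.pow_le_pow_right (by omega) hq)
        rw [Nat.testBit_lt_two_pow this]
        simp [hq]
    omega
  · intro h q hq
    have : i = 2 ^ n - 1 := by omega
    rw [this, Nat.testBit_two_pow_sub_one]
    simpa using hq

/-! ### A local characterization of the counter word -/

/-- The positions `k + 1, …, k + n` carry `n` bits, most significant first; this says that the `p`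
least significant ones are all `1`. -/
def LowOnes (n : ℕ) (α : ℕ → Fin 3) (k p : ℕ) : Prop := ∀ q < p, α (k + (n - q)) = 1

/-- The word starts with `# 0^n`, and each block is followed by its successor block, or by `#^ω`
if all its bits are `1`. Blocks are recognized by a `#` followed by a letter other than `#`. -/
def Spec (n : ℕ) (α : ℕ → Fin 3) : Prop :=
  (α 0 = 2 ∧ ∀ p < n, α (n - p) = 0) ∧
  ∀ k, α k = 2 → α (k + 1) ≠ 2 →
    (LowOnes n α k n ∧ ∀ l, k + (n + 1) ≤ l → α l = 2) ∨
    (¬ LowOnes n α k n ∧ α (k + (n + 1)) = 2 ∧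
      ∀ p < n,
        (α (k + (n + 1 + (n - p))) = 1 ∧ ¬ (LowOnes n α k p ↔ α (k + (n - p)) = 1)) ∨
        (α (k + (n + 1 + (n - p))) = 0 ∧ (LowOnes n α k p ↔ α (k + (n - p)) = 1)))

theorem lowOnes_iff {n i p : ℕ} {α : ℕ → Fin 3} (hp : p ≤ n)
    (h : ∀ q < n, α (i * (n + 1) + (n - q)) = if Nat.testBit i q then 1 else 0) :
    LowOnes n α (i * (n + 1)) p ↔ ∀ q < p, i.testBit q = true := by
  refine forall₂_congr fun q hq => ?_
  rw [h q (by omega)]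
  split <;> simp_all

theorem spec_counterWord (n : ℕ) : Spec n (counterWord n) := by
  have pos : 0 < 2 ^ n := Nat.two_pow_pos n
  refine ⟨⟨by simpa using counterWord_sep pos, fun p hp => ?_⟩, fun k hk hk1 => ?_⟩
  · simpa using counterWord_bit pos hp
  rcases position_cases n k with ⟨i, hi, rfl⟩ | ⟨i, hi, p, hp, rfl⟩ | hk2
  · have hb := fun q (hq : q < n) => counterWord_bit hi hq
    rw [lowOnes_iff le_rfl hb, all_ones_iff hi]
    have next : i * (n + 1) + (n + 1) = (i + 1) * (n + 1) := by ring
    rcases Nat.lt_or_ge (i + 1) (2 ^ n) with h | h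
    · refine Or.inr ⟨by omega, ?_, fun p hp => ?_⟩
      · rw [next]
        exact counterWord_sep h
      · rw [lowOnes_iff hp.le hb, hb p hp, ← add_assoc, next, counterWord_bit h hp]
        have := testBit_succ_iff p i
        by_cases h1 : (i + 1).testBit p = true
        · have h2 := this.1 h1
          refine Or.inl ⟨by simp [h1], ?_⟩
          convert h2 using 2
          split <;> simp_all
        · have h2 := not_not.1 (mt this.2 h1)
          refine Or.inr ⟨by simp [h1], ?_⟩
          convert h2 using 1
          split <;> simp_all
    · refine Or.inl ⟨by omega, fun l hl => counterWord_tail ?_⟩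
      rw [show 2 ^ n = i + 1 by omega]
      omega
  · rw [counterWord_bit hi hp] at hk
    split at hk <;> simp at hk
  · exact absurd (counterWord_tail (by omega)) hk1

theorem eq_counterWord_of_spec {n : ℕ} (hn : 1 ≤ n) {α : ℕ → Fin 3} (h : Spec n α) :
    α = counterWord n := by
  obtain ⟨⟨h0, hz⟩, hs⟩ := h
  -- The second part of `Spec` applies at a correct block: a bit follows its `#`.
  have ap : ∀ i, α (i * (n + 1)) = 2 →
      (∀ q < n, α (i * (n + 1) + (n - q)) = if Nat.testBit i q then 1 else 0) →
      α (i * (n + 1) + 1) ≠ 2 := by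
    intro i _ hb
    have := hb (n - 1) (by omega)
    rw [show n - (n - 1) = 1 by omega] at this
    rw [this]
    split <;> simp
  have blocks : ∀ i, i < 2 ^ n → α (i * (n + 1)) = 2 ∧
      ∀ q < n, α (i * (n + 1) + (n - q)) = if Nat.testBit i q then 1 else 0 := by
    intro i
    induction i with
    | zero =>
      intro _
      exact ⟨by simpa using h0, fun q hq => by simpa using hz q hq⟩
    | succ i ih =>
      intro hi
      obtain ⟨ha, hb⟩ := ih (by omega)
      have next : i * (n + 1) + (n + 1) = (i + 1) * (n + 1) := by ring
      rcases hs _ ha (ap i ha hb) with ⟨h1, -⟩ | ⟨-, h2, h3⟩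
      · rw [lowOnes_iff le_rfl hb, all_ones_iff (by omega)] at h1
        omega
      · rw [next] at h2
        refine ⟨h2, fun p hp => ?_⟩
        have h4 := h3 p hp
        rw [lowOnes_iff hp.le hb, hb p hp, ← add_assoc, next] at h4
        have e : ((if i.testBit p = true then (1 : Fin 3) else 0) = 1) ↔ i.testBit p = true := by
          split <;> simp_all
        rw [e, ← testBit_succ_iff] at h4
        rcases h4 with ⟨h5, h6⟩ | ⟨h5, h6⟩
        · rw [h5, if_pos h6]
        · rw [h5, if_neg fun h7 => (testBit_succ_iff p i).1 h7 h6]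
  funext k
  rcases position_cases n k with ⟨i, hi, rfl⟩ | ⟨i, hi, p, hp, rfl⟩ | hk
  · rw [(blocks i hi).1, counterWord_sep hi]
  · rw [(blocks i hi).2 p hp, counterWord_bit hi hp]
  · rw [counterWord_tail hk]
    have pos : 0 < 2 ^ n := Nat.two_pow_pos n
    obtain ⟨i, hi⟩ : ∃ i, i + 1 = 2 ^ n := ⟨2 ^ n - 1, by omega⟩
    obtain ⟨ha, hb⟩ := blocks i (by omega)
    rcases hs _ ha (ap i ha hb) with ⟨-, h1⟩ | ⟨h1, -⟩
    · apply h1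
      rw [← hi] at hk
      linarith
    · rw [lowOnes_iff le_rfl hb, all_ones_iff (by omega)] at h1
      omega

/-! ### The formula -/

/-- Satisfaction over the alphabet `{0, 1, #}` of local actions, with letters as atoms. -/
abbrev Sat (φ : VLDL (Fin 3) (Fin 3)) (α : ℕ → Fin 3) (k : ℕ) : Prop :=
  VLDL.sat (fun v a => v = a) (fun _ => SymKind.loc) φ α k

/-- Truth. -/
def fTrue : VLDL (Fin 3) (Fin 3) := .or (.atom 0) (.neg (.atom 0))

theorem sat_fTrue (α : ℕ → Fin 3) (k : ℕ) : Sat fTrue α k := by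
  simp only [Sat, fTrue, VLDL.sat]
  exact em _

/-- The automaton accepting all words of length one. -/
def oneStep : VPAData (Fin 3) 2 0 where
  callΔ _ _ _ _ := false
  retΔ _ _ _ _ := false
  locΔ q _ q' := q == 0 && q' == 1
  start q := q == 0
  final q := q == 1

/-- The automaton accepting all finite words. -/
def anySteps : VPAData (Fin 3) 1 0 where
  callΔ _ _ _ _ := false
  retΔ _ _ _ _ := false
  locΔ _ _ _ := true
  start _ := true
  final _ := true

/-- The operator *next*. -/
def fNext (φ : VLDL (Fin 3) (Fin 3)) : VLDL (Fin 3) (Fin 3) := .dia 2 0 oneStep (fun _ => fTrue) φ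

/-- The operator *always*. -/
def fAlways (φ : VLDL (Fin 3) (Fin 3)) : VLDL (Fin 3) (Fin 3) :=
  .box 1 0 anySteps (fun _ => fTrue) φ

theorem sat_fNext (φ : VLDL (Fin 3) (Fin 3)) (α : ℕ → Fin 3) (k : ℕ) :
    Sat (fNext φ) α k ↔ Sat φ α (k + 1) := by
  simp only [Sat, fNext, VLDL.sat, VPAData.step, vstep, oneStep]
  constructor
  · rintro ⟨l, hl, ⟨ρ, h0, -, hs, hf, -⟩, hφ⟩
    simp only [beq_iff_eq, Bool.and_eq_true] at h0 hf hs
    have h1 : l ≠ k := by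
      rintro rfl
      rw [h0] at hf
      simp at hf
    have h2 : ¬ k + 1 < l := by
      intro h
      have a := (hs k le_rfl (by omega)).1.2
      have b := (hs (k + 1) (by omega) h).1.1
      rw [a] at b
      simp at b
    rwa [show l = k + 1 by omega] at hφ
  · intro h
    refine ⟨k + 1, by omega, ⟨fun i => (if i = k then 0 else 1, []), by simp, rfl, ?_, by simp, ?_⟩,
      h⟩
    · intro i h1 h2
      obtain rfl : i = k := by omega
      simp
    · intro i _ _
      exact sat_fTrue α i

theorem sat_fAlways (φ : VLDL (Fin 3) (Fin 3)) (α : ℕ → Fin 3) (k : ℕ) :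
    Sat (fAlways φ) α k ↔ ∀ l, k ≤ l → Sat φ α l := by
  simp only [Sat, fAlways, VLDL.sat, VPAData.step, vstep, anySteps]
  refine forall₂_congr fun l _ =>
    ⟨fun h => h ⟨fun _ => (0, []), trivial, rfl, ?_, trivial, ?_⟩, fun h _ => h⟩
  · intro i _ _
    exact ⟨trivial, rfl⟩
  · intro i _ _
    exact sat_fTrue α i

/-- The `j`-fold iteration of *next*. -/
def fNexts : ℕ → VLDL (Fin 3) (Fin 3) → VLDL (Fin 3) (Fin 3)
  | 0, φ => φ
  | j + 1, φ => fNext (fNexts j φ)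

theorem sat_fNexts (j : ℕ) (φ : VLDL (Fin 3) (Fin 3)) (α : ℕ → Fin 3) (k : ℕ) :
    Sat (fNexts j φ) α k ↔ Sat φ α (k + j) := by
  induction j generalizing k with
  | zero => rfl
  | succ j ih =>
    rw [fNexts, sat_fNext, ih]
    congr! 1
    omega

/-- The letter `j` positions ahead is `a`. -/
def fLetter (j : ℕ) (a : Fin 3) : VLDL (Fin 3) (Fin 3) := fNexts j (.atom a)

theorem sat_fLetter (j : ℕ) (a : Fin 3) (α : ℕ → Fin 3) (k : ℕ) :
    Sat (fLetter j a) α k ↔ α (k + j) = a := by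
  rw [fLetter, sat_fNexts]
  exact eq_comm

/-- The conjunction of `f 0, …, f (m - 1)`. -/
def fAll : ℕ → (ℕ → VLDL (Fin 3) (Fin 3)) → VLDL (Fin 3) (Fin 3)
  | 0, _ => fTrue
  | m + 1, f => .and (fAll m f) (f m)

theorem sat_fAll (m : ℕ) (f : ℕ → VLDL (Fin 3) (Fin 3)) (α : ℕ → Fin 3) (k : ℕ) :
    Sat (fAll m f) α k ↔ ∀ p < m, Sat (f p) α k := by
  induction m with
  | zero => exact ⟨fun _ p hp => absurd hp (Nat.not_lt_zero p), fun _ => sat_fTrue α k⟩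
  | succ m ih =>
    rw [Nat.forall_lt_succ_right, ← ih]
    rfl

/-- Logical equivalence. -/
def fIff (φ ψ : VLDL (Fin 3) (Fin 3)) : VLDL (Fin 3) (Fin 3) :=
  .or (.and φ ψ) (.and (.neg φ) (.neg ψ))

theorem sat_fIff (φ ψ : VLDL (Fin 3) (Fin 3)) (α : ℕ → Fin 3) (k : ℕ) :
    Sat (fIff φ ψ) α k ↔ (Sat φ α k ↔ Sat ψ α k) := by
  exact (iff_iff_and_or_not_and_not (a := Sat φ α k) (b := Sat ψ α k)).symm

theorem sat_and (φ ψ : VLDL (Fin 3) (Fin 3)) (α : ℕ → Fin 3) (k : ℕ) :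
    Sat (.and φ ψ) α k ↔ Sat φ α k ∧ Sat ψ α k := Iff.rfl

theorem sat_or (φ ψ : VLDL (Fin 3) (Fin 3)) (α : ℕ → Fin 3) (k : ℕ) :
    Sat (.or φ ψ) α k ↔ Sat φ α k ∨ Sat ψ α k := Iff.rfl

theorem sat_neg (φ : VLDL (Fin 3) (Fin 3)) (α : ℕ → Fin 3) (k : ℕ) :
    Sat (.neg φ) α k ↔ ¬ Sat φ α k := Iff.rfl

/-- The formula expressing `LowOnes`. -/
def fLowOnes (n p : ℕ) : VLDL (Fin 3) (Fin 3) := fAll p fun q => fLetter (n - q) 1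

theorem sat_fLowOnes (n p : ℕ) (α : ℕ → Fin 3) (k : ℕ) :
    Sat (fLowOnes n p) α k ↔ LowOnes n α k p := by
  simp only [fLowOnes, sat_fAll, sat_fLetter, LowOnes]

/-- Bit `p` of the next block is bit `p` of the binary successor of the present block. -/
def fSuccBit (n p : ℕ) : VLDL (Fin 3) (Fin 3) :=
  .or (.and (fLetter (n + 1 + (n - p)) 1) (.neg (fIff (fLowOnes n p) (fLetter (n - p) 1))))
    (.and (fLetter (n + 1 + (n - p)) 0) (fIff (fLowOnes n p) (fLetter (n - p) 1)))

/-- If a block starts here, then it is followed by `#^ω` if all its bits are `1`, and by its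
successor block otherwise. -/
def fBlock (n : ℕ) : VLDL (Fin 3) (Fin 3) :=
  .or (.neg (.and (fLetter 0 2) (.neg (fLetter 1 2))))
    (.or (.and (fLowOnes n n) (fNexts (n + 1) (fAlways (fLetter 0 2))))
      (.and (.neg (fLowOnes n n)) (.and (fLetter (n + 1) 2) (fAll n (fSuccBit n)))))

/-- The formula defining the `n`-bit counter word. -/
def fCounter (n : ℕ) : VLDL (Fin 3) (Fin 3) :=
  .and (.and (fLetter 0 2) (fAll n fun p => fLetter (n - p) 0)) (fAlways (fBlock n))

theorem sat_fCounter (n : ℕ) (α : ℕ → Fin 3) : Sat (fCounter n) α 0 ↔ Spec n α := by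
  simp only [fCounter, fBlock, fSuccBit, sat_and, sat_or, sat_neg, sat_fLetter, sat_fAll,
    sat_fAlways, sat_fNexts, sat_fIff, sat_fLowOnes, Spec, zero_add, add_zero, Nat.zero_le,
    forall_const, ← imp_iff_not_or, and_imp, ne_eq]

/-! ### The size of the formula -/

theorem size_fTrue : fTrue.size = 4 := rfl

theorem size_fNext (φ : VLDL (Fin 3) (Fin 3)) : (fNext φ).size = φ.size + 11 := by
  simp [fNext, VLDL.size, size_fTrue]

theorem size_fAlways (φ : VLDL (Fin 3) (Fin 3)) : (fAlways φ).size = φ.size + 6 := by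
  simp [fAlways, VLDL.size, size_fTrue]

theorem size_fNexts (j : ℕ) (φ : VLDL (Fin 3) (Fin 3)) :
    (fNexts j φ).size = φ.size + 11 * j := by
  induction j with
  | zero => rfl
  | succ j ih => rw [fNexts, size_fNext, ih]; ring

theorem size_fLetter (j : ℕ) (a : Fin 3) : (fLetter j a).size = 1 + 11 * j := size_fNexts j _

theorem size_fAll (m s : ℕ) (f : ℕ → VLDL (Fin 3) (Fin 3)) (h : ∀ p < m, (f p).size ≤ s) :
    (fAll m f).size ≤ 4 + m * (s + 1) := by
  induction m with
  | zero => simp [fAll, size_fTrue]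
  | succ m ih =>
    have h1 := ih fun p hp => h p (by omega)
    have h2 := h m (by omega)
    simp only [fAll, VLDL.size]
    linarith

theorem size_fIff (φ ψ : VLDL (Fin 3) (Fin 3)) :
    (fIff φ ψ).size = 2 * φ.size + 2 * ψ.size + 5 := by
  simp only [fIff, VLDL.size]
  ring

theorem size_fLowOnes {n p : ℕ} (hp : p ≤ n) : (fLowOnes n p).size ≤ 4 + n * (11 * n + 2) := by
  refine (size_fAll p (11 * n + 1) _ fun q _ => ?_).trans ?_
  · rw [size_fLetter]
    omega
  · have := Nat.mul_le_mul_right (11 * n + 2) hp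
    simpa using this

theorem size_fSuccBit {n p : ℕ} (hp : p < n) :
    (fSuccBit n p).size ≤ 4 * (n * (11 * n + 2)) + 88 * n + 60 := by
  have := size_fLowOnes hp.le
  simp only [fSuccBit, VLDL.size, size_fLetter, size_fIff]
  omega

theorem size_fCounter {n : ℕ} (hn : 1 ≤ n) : (fCounter n).size ≤ 1000 * n ^ 3 + 1000 := by
  have h1 := size_fLowOnes (le_refl n)
  have h2 := size_fAll n _ (fSuccBit n) fun p hp => size_fSuccBit hp
  have h3 := size_fAll n (11 * n + 1) (fun p => fLetter (n - p) 0) fun p _ => by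
    rw [size_fLetter]; omega
  simp only [fCounter, fBlock, VLDL.size, size_fLetter, size_fAlways, size_fNexts]
  have e1 : n ≤ n ^ 3 := Nat.le_self_pow (by omega) n
  have e2 : n ^ 2 ≤ n ^ 3 := Nat.pow_le_pow_right hn (by omega)
  ring_nf at h1 h2 h3 ⊢
  omega

/-! ### The lower bound for automata -/

/-- An automaton that accepts exactly one word, which is eventually constant `#` but carries another
letter at position `P`, has more than `P` states. -/
theorem states_lower_bound {N M P K : ℕ} {w : ℕ → Fin 3} (B : VPAData (Fin 3) N M)
    (h : ∀ α : ℕ → Fin 3, B.BuchiAccepts (fun _ => SymKind.loc) α ↔ α = w)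
    (hP : w P ≠ 2) (hK : ∀ k, K ≤ k → w k = 2) : P < N := by
  obtain ⟨ρ, h0, hnil, hs, hf⟩ := (h w).2 rfl
  by_contra hN
  have hstack : ∀ i, (ρ i).2 = [] := by
    intro i
    induction i with
    | zero => exact hnil
    | succ i ih => exact (hs i).2.trans ih
  obtain ⟨x, y, hxy, hq⟩ : ∃ x y : Fin (P + 1), x < y ∧ (ρ x).1 = (ρ y).1 := by
    obtain ⟨x, y, hne, he⟩ := Fintype.exists_ne_map_eq_of_card_lt
      (fun x : Fin (P + 1) => (ρ x).1) (by simp; omega)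
    rcases lt_or_gt_of_ne hne with hlt | hlt
    · exact ⟨x, y, hlt, he⟩
    · exact ⟨y, x, hlt, he.symm⟩
  have hρ : ρ x = ρ y := Prod.ext hq (by rw [hstack, hstack])
  obtain ⟨a, ha⟩ := x
  obtain ⟨b, hb⟩ := y
  simp only [Fin.mk_lt_mk] at hxy hρ
  -- Cut the segment between `a` and `b` out of both the run and the word.
  have cut : (fun m => w (if m < a then m else m + (b - a))) = w := by
    rw [← h]
    refine ⟨fun m => ρ (if m < a then m else m + (b - a)), ?_, hstack _, fun i => ?_, fun i => ?_⟩
    · have e : ρ (if 0 < a then 0 else 0 + (b - a)) = ρ 0 := by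
        split
        · rfl
        · obtain rfl : a = 0 := by omega
          simpa using hρ.symm
      simpa only [e] using h0
    · have := hs (if i < a then i else i + (b - a))
      convert this using 1
      beta_reduce
      by_cases h1 : i + 1 < a
      · rw [if_pos h1, if_pos (by omega)]
      · by_cases h2 : i < a
        · rw [if_neg h1, if_pos h2, show i + 1 = a by omega, hρ]
          congr 1
          omega
        · rw [if_neg h1, if_neg h2]
          congr 1
          omega
    · obtain ⟨j, hj, hfj⟩ := hf (i + b)
      refine ⟨j - (b - a), by omega, ?_⟩
      beta_reduce
      rw [if_neg (by omega), show j - (b - a) + (b - a) = j by omega]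
      exact hfj
  have per : ∀ t, w (P + t * (b - a)) = w P := by
    intro t
    induction t with
    | zero => simp
    | succ t ih =>
      have := congrFun cut (P + t * (b - a))
      have ge : a ≤ P + t * (b - a) := le_trans (by omega) (Nat.le_add_right P _)
      simp only [not_lt.2 ge, if_false] at this
      rw [← ih, ← this]
      congr 1
      ring
  apply hP
  rw [← per K]
  apply hK
  have : K * 1 ≤ K * (b - a) := Nat.mul_le_mul_left K (by omega)
  omega

/-- Over the pushdown alphabet `({}, {}, {0, 1, #})` in which every
letter is a local action, the singleton language `L_n` consisting of the word that
enumerates an `n`-bit binary counter is definable by a VLDL formula of polynomial size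
in `n`, while every Büchi visibly pushdown automaton recognizing `L_n` needs at least
`2^n` states. -/
theorem vldl_exponentially_more_concise_than_bvpa :
    ∃ c d : ℕ, ∀ n : ℕ, 1 ≤ n →
      (∃ φ : VLDL (Fin 3) (Fin 3),
        φ.size ≤ c * n ^ d + c ∧
        ∀ α : ℕ → Fin 3,
          VLDL.sat (fun v a => v = a) (fun _ => SymKind.loc) φ α 0 ↔ α = counterWord n) ∧
      (∀ (N M : ℕ) (B : VPAData (Fin 3) N M),
        (∀ α : ℕ → Fin 3, B.BuchiAccepts (fun _ => SymKind.loc) α ↔ α = counterWord n) →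
        2 ^ n ≤ N) := by
  refine ⟨1000, 3, fun n hn => ⟨⟨fCounter n, size_fCounter hn, fun α => ?_⟩, fun N M B h => ?_⟩⟩
  · refine (sat_fCounter n α).trans ⟨eq_counterWord_of_spec hn, ?_⟩
    rintro rfl
    exact spec_counterWord n
  · have pos : 0 < 2 ^ n := Nat.two_pow_pos n
    -- The least significant bit of the last block is a letter other than `#`.
    have hP : counterWord n ((2 ^ n - 1) * (n + 1) + (n - 0)) ≠ 2 := by
      rw [counterWord_bit (by omega) (by omega)]
      split <;> simp
    have := states_lower_bound B h hP fun k => counterWord_tail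
    have := Nat.le_mul_of_pos_right (2 ^ n - 1) (show 0 < n + 1 by omega)
    omega
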